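/- arXiv:0909.1599 — 2 statements merged into one kernel-verified Lean document; each statement's English description precedes it below -/
import Mathlib

section
/- Let N ≥ 1, M = N+1, let {φ_k}_{k=1}^M be the real harmonic tight frame in ℝ^N, and let ψ_k = γ(−1)^k φ_k, k = 1,...,M, with a fixed sign γ = ±1 (a modulated harmonic tight frame). Then for all 1 ≤ k < ℓ ≤ M, ⟨ψ_k, ψ_ℓ⟩ = −1/N; in particular the modulated harmonic tight frame is a restricted equiangular tight frame. -/
/-- The real harmonic tight frame of `M` vectors in `ℝ^N` (0-based indexing: `htf N M k`
is the vector `φ_{k+1}` of the paper, for `k = 0, …, M-1`). -/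
noncomputable def htf (N M : ℕ) (k : Fin M) (i : Fin N) : ℝ :=
  if N % 2 = 0 then
    if (i : ℕ) < N / 2 then
      Real.sqrt (2 / N) * Real.cos (((2 * (i : ℕ) + 1 : ℕ) : ℝ) * (k : ℕ) * Real.pi / M)
    else
      Real.sqrt (2 / N) *
        Real.sin (((2 * ((i : ℕ) - N / 2) + 1 : ℕ) : ℝ) * (k : ℕ) * Real.pi / M)
  else
    if (i : ℕ) = 0 then Real.sqrt (2 / N) * (1 / Real.sqrt 2)
    else if (i : ℕ) ≤ (N - 1) / 2 then
      Real.sqrt (2 / N) * Real.cos (((2 * (i : ℕ) : ℕ) : ℝ) * (k : ℕ) * Real.pi / M)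
    else
      Real.sqrt (2 / N) *
        Real.sin (((2 * ((i : ℕ) - (N - 1) / 2) : ℕ) : ℝ) * (k : ℕ) * Real.pi / M)

/-- A restricted equiangular tight frame: a unit-norm tight frame (`F*F = (M/N) I_N`) whose
pairwise inner products `⟨ψ_k, ψ_ℓ⟩` (for `k < ℓ`) all equal one common constant. -/
def IsRestrictedETF {M N : ℕ} (Ψ : Fin M → Fin N → ℝ) : Prop :=
  (∀ k : Fin M, ∑ i : Fin N, Ψ k i ^ 2 = 1) ∧
  (∀ i j : Fin N,
    ∑ k : Fin M, Ψ k i * Ψ k j = ((M : ℝ) / N) * (if i = j then 1 else 0)) ∧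
  (∃ c : ℝ, ∀ k ℓ : Fin M, k < ℓ → ∑ i : Fin N, Ψ k i * Ψ ℓ i = c)

theorem aux_even (n : ℕ) (θ : ℝ) :
    Real.sin θ * (2 * ∑ j ∈ Finset.range n, Real.cos ((2 * j + 1) * θ)) = Real.sin (2 * n * θ) := by
  induction n with
  | zero => simp
  | succ n ih =>
    rw [Finset.sum_range_succ, mul_add, mul_add, ih]
    have e1 : (2 * (n : ℝ)) * θ = (2 * n + 1) * θ - θ := by ring
    have e2 : (2 * ((n + 1 : ℕ) : ℝ)) * θ = (2 * n + 1) * θ + θ := by push_cast; ring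
    rw [e1, e2, Real.sin_add, Real.sin_sub]; ring

theorem aux_odd (n : ℕ) (θ : ℝ) :
    Real.sin θ * (1 + 2 * ∑ j ∈ Finset.range n, Real.cos ((2 * (j + 1)) * θ))
      = Real.sin ((2 * n + 1) * θ) := by
  induction n with
  | zero => simp
  | succ n ih =>
    rw [Finset.sum_range_succ, mul_add 2, ← add_assoc, mul_add, ih]
    have e1 : (2 * (n : ℝ) + 1) * θ = (2 * (n + 1)) * θ - θ := by ring
    have e2 : (2 * ((n + 1 : ℕ) : ℝ) + 1) * θ = (2 * (n + 1)) * θ + θ := by push_cast; ring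
    rw [e1, e2, Real.sin_add, Real.sin_sub]; ring

theorem aux_sq (N : ℕ) : Real.sqrt (2 / N) * Real.sqrt (2 / N) = 2 / N :=
  Real.mul_self_sqrt (by positivity)

theorem aux_inner {N : ℕ} (M : ℕ) : ∃ D : ℝ → ℝ, D 0 = N ∧
    (∀ θ, Real.sin θ * D θ = Real.sin (N * θ)) ∧
    ∀ k l : Fin M, ∑ i : Fin N, htf N M k i * htf N M l i =
      D ((((l : ℕ) : ℝ) - (k : ℕ)) * Real.pi / M) / N := by
  rcases Nat.even_or_odd' N with ⟨n, rfl | rfl⟩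
  · refine ⟨fun θ => 2 * ∑ j ∈ Finset.range n, Real.cos ((2 * j + 1) * θ), by simp, ?_, ?_⟩
    · intro θ; rw [aux_even]; push_cast; rfl
    · intro k l
      have hd : 2 * n / 2 = n := by omega
      have hm : 2 * n % 2 = 0 := by omega
      have hs := aux_sq (2 * n)
      simp only [htf, hm, hd, if_true]
      generalize Real.sqrt (2 / ((2 * n : ℕ) : ℝ)) = s at hs ⊢
      rw [Fin.sum_univ_eq_sum_range (fun i : ℕ =>
        (if i < n then s * Real.cos (((2 * i + 1 : ℕ) : ℝ) * (k : ℕ) * Real.pi / M)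
          else s * Real.sin (((2 * (i - n) + 1 : ℕ) : ℝ) * (k : ℕ) * Real.pi / M)) *
        (if i < n then s * Real.cos (((2 * i + 1 : ℕ) : ℝ) * (l : ℕ) * Real.pi / M)
          else s * Real.sin (((2 * (i - n) + 1 : ℕ) : ℝ) * (l : ℕ) * Real.pi / M))) (2 * n)]
      rw [two_mul n, Finset.sum_range_add, ← two_mul n, ← Finset.sum_add_distrib,
        mul_div_right_comm, Finset.mul_sum, ← hs]
      refine Finset.sum_congr rfl fun j hj => ?_
      have hj := Finset.mem_range.1 hj
      have e : (2 * (j : ℝ) + 1) * ((((l : ℕ) : ℝ) - (k : ℕ)) * Real.pi / M) =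
        ((2 * j + 1 : ℕ) : ℝ) * (l : ℕ) * Real.pi / M
          - ((2 * j + 1 : ℕ) : ℝ) * (k : ℕ) * Real.pi / M := by push_cast; ring
      rw [e, Real.cos_sub]
      simp only [hj, if_true, Nat.add_sub_cancel_left, show ¬ (n + j < n) by omega, if_false]
      ring
  · refine ⟨fun θ => 1 + 2 * ∑ j ∈ Finset.range n, Real.cos ((2 * (j + 1)) * θ),
      by simp; ring, ?_, ?_⟩
    · intro θ; rw [aux_odd]; push_cast; rfl
    · intro k l
      have hd : (2 * n + 1 - 1) / 2 = n := by omega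
      have hm : ¬ ((2 * n + 1) % 2 = 0) := by omega
      have hs := aux_sq (2 * n + 1)
      simp only [htf, hm, hd, if_false]
      generalize Real.sqrt (2 / ((2 * n + 1 : ℕ) : ℝ)) = s at hs ⊢
      rw [Fin.sum_univ_eq_sum_range (fun i : ℕ =>
        (if i = 0 then s * (1 / Real.sqrt 2) else
          if i ≤ n then s * Real.cos (((2 * i : ℕ) : ℝ) * (k : ℕ) * Real.pi / M)
          else s * Real.sin (((2 * (i - n) : ℕ) : ℝ) * (k : ℕ) * Real.pi / M)) *
        (if i = 0 then s * (1 / Real.sqrt 2) else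
          if i ≤ n then s * Real.cos (((2 * i : ℕ) : ℝ) * (l : ℕ) * Real.pi / M)
          else s * Real.sin (((2 * (i - n) : ℕ) : ℝ) * (l : ℕ) * Real.pi / M))) (2 * n + 1)]
      rw [Finset.sum_range_succ', two_mul n, Finset.sum_range_add, ← two_mul n,
        ← Finset.sum_add_distrib, add_div, mul_div_right_comm 2, Finset.mul_sum, ← hs, add_comm (Finset.sum _ _)]
      congr 1
      · have h2 : Real.sqrt 2 * Real.sqrt 2 = 2 := Real.mul_self_sqrt (by norm_num)
        simp only [if_true]
        have : s * (1 / Real.sqrt 2) * (s * (1 / Real.sqrt 2))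
          = (s * s) / (Real.sqrt 2 * Real.sqrt 2) := by field_simp
        rw [this, h2, hs]; ring
      refine Finset.sum_congr rfl fun j hj => ?_
      have hj := Finset.mem_range.1 hj
      have e : (2 * ((j : ℝ) + 1)) * ((((l : ℕ) : ℝ) - (k : ℕ)) * Real.pi / M) =
        ((2 * (j + 1) : ℕ) : ℝ) * (l : ℕ) * Real.pi / M
          - ((2 * (j + 1) : ℕ) : ℝ) * (k : ℕ) * Real.pi / M := by push_cast; ring
      rw [e, Real.cos_sub]
      simp only [show j + 1 ≤ n by omega, if_true, show n + j + 1 - n = j + 1 by omega,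
        show ¬ (n + j + 1 ≤ n) by omega, if_false, Nat.succ_ne_zero]
      ring

theorem aux_tight {M N : ℕ} (hN : 1 ≤ N) (hM : M = N + 1) (F : Matrix (Fin M) (Fin N) ℝ)
    (hG : ∀ k l, ∑ i, F k i * F l i = if k = l then 1 else -1 / (N : ℝ)) (i j : Fin N) :
    ∑ k, F k i * F k j = ((M : ℝ) / N) * (if i = j then 1 else 0) := by
  have hN0 : (N : ℝ) ≠ 0 := by positivity
  have hMr : (M : ℝ) = N + 1 := by rw [hM]; push_cast; rfl
  set S : Matrix (Fin N) (Fin N) ℝ := F.transpose * F with hS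
  have hGm : ∀ k l, (F * F.transpose) k l = if k = l then 1 else -1 / (N : ℝ) := by
    intro k l; rw [← hG]; rfl
  have t1 : S.trace = M := by
    rw [hS, Matrix.trace_mul_comm, Matrix.trace]
    simp [hGm]
  have t2 : (S * S).trace = (M : ℝ) ^ 2 / N := by
    have : (S * S).trace = ((F * F.transpose) * (F * F.transpose)).trace := by
      rw [hS, Matrix.mul_assoc, Matrix.trace_mul_comm]
      simp only [Matrix.mul_assoc]
    rw [this, Matrix.trace]
    simp only [Matrix.diag, Matrix.mul_apply (M := F * F.transpose)]
    simp only [hGm]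
    have : ∀ x : Fin M, ∑ y : Fin M, (if x = y then (1 : ℝ) else -1 / N) *
        (if y = x then (1 : ℝ) else -1 / N) = 1 + N * (1 / N ^ 2) := by
      intro x
      have : ∀ y : Fin M, (if x = y then (1 : ℝ) else -1 / N) *
        (if y = x then (1 : ℝ) else -1 / N) =
          (if x = y then (1 - 1 / (N : ℝ) ^ 2) else 0) + 1 / N ^ 2 := by
        intro y
        by_cases h : x = y
        · simp [h]
        · simp [h, Ne.symm h]; field_simp
      rw [Finset.sum_congr rfl fun y _ => this y, Finset.sum_add_distrib]
      simp [hMr]; ring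
    rw [Finset.sum_congr rfl fun y _ => this y]
    simp [hMr]; field_simp
  have hz : S - ((M : ℝ) / N) • (1 : Matrix (Fin N) (Fin N) ℝ) = 0 := by
    rw [← Matrix.trace_conjTranspose_mul_self_eq_zero_iff]
    have hst : (S - ((M : ℝ) / N) • (1 : Matrix (Fin N) (Fin N) ℝ)).conjTranspose
        = S - ((M : ℝ) / N) • (1 : Matrix (Fin N) (Fin N) ℝ) := by
      simp [Matrix.conjTranspose_eq_transpose_of_trivial, hS]
    rw [hst]
    simp only [sub_mul, mul_sub, Matrix.trace_sub, t2, Matrix.smul_mul, Matrix.mul_smul, one_mul,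
      mul_one, Matrix.trace_smul, t1, Matrix.trace_one, Fintype.card_fin, smul_eq_mul]
    field_simp; ring
  have := congrFun (congrFun (sub_eq_zero.1 hz) i) j
  simpa [hS, Matrix.mul_apply, Matrix.one_apply] using this

/-- For `M = N + 1`, the modulated harmonic tight frame `ψ_k = γ(-1)^k φ_k` (with a fixed
sign `γ = ±1`; here `htf N M k = φ_{k+1}`) satisfies `⟨ψ_k, ψ_ℓ⟩ = -1/N` for all
`1 ≤ k < ℓ ≤ M`; in particular it is a restricted equiangular tight frame. -/
theorem stmt14 {N : ℕ} (hN : 1 ≤ N) (M : ℕ) (hM : M = N + 1)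
    (γ : ℝ) (hγ : γ = 1 ∨ γ = -1) :
    (∀ k ℓ : Fin M, k < ℓ →
      ∑ i : Fin N, (γ * (-1 : ℝ) ^ ((k : ℕ) + 1) * htf N M k i) *
        (γ * (-1 : ℝ) ^ ((ℓ : ℕ) + 1) * htf N M ℓ i) = -1 / N) ∧
    IsRestrictedETF (fun (k : Fin M) (i : Fin N) =>
      γ * (-1 : ℝ) ^ ((k : ℕ) + 1) * htf N M k i) := by
  have hN0 : (N : ℝ) ≠ 0 := by positivity
  have hM0 : (0 : ℝ) < M := by rw [hM]; positivity
  have hγ2 : γ * γ = 1 := by rcases hγ with h | h <;> simp [h]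
  obtain ⟨D, hD0, hD, hI⟩ := aux_inner (N := N) M
  have key : ∀ k ℓ : Fin M, ∑ i : Fin N, (γ * (-1 : ℝ) ^ ((k : ℕ) + 1) * htf N M k i) *
        (γ * (-1 : ℝ) ^ ((ℓ : ℕ) + 1) * htf N M ℓ i) =
        (-1 : ℝ) ^ ((k : ℕ) + (ℓ : ℕ)) * (D ((((ℓ : ℕ) : ℝ) - (k : ℕ)) * Real.pi / M) / N) := by
    intro k l
    rw [← hI, Finset.mul_sum]
    refine Finset.sum_congr rfl fun i _ => ?_
    linear_combination ((-1 : ℝ) ^ ((k : ℕ) + (l : ℕ)) * htf N M k i * htf N M l i) * hγ2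
  have diag : ∀ k : Fin M, ∑ i : Fin N, (γ * (-1 : ℝ) ^ ((k : ℕ) + 1) * htf N M k i) *
        (γ * (-1 : ℝ) ^ ((k : ℕ) + 1) * htf N M k i) = 1 := by
    intro k
    rw [key, sub_self, zero_mul, zero_div, hD0, div_self hN0, mul_one, Even.neg_one_pow ⟨_, rfl⟩]
  have off : ∀ k ℓ : Fin M, k < ℓ →
      ∑ i : Fin N, (γ * (-1 : ℝ) ^ ((k : ℕ) + 1) * htf N M k i) *
        (γ * (-1 : ℝ) ^ ((ℓ : ℕ) + 1) * htf N M ℓ i) = -1 / N := by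
    intro k l hkl
    rw [key]
    obtain ⟨d, hd⟩ := Nat.exists_eq_add_of_lt (Fin.lt_def.1 hkl)
    have hlt : d + 1 < M := by have := l.2; omega
    have hθ : (((l : ℕ) : ℝ) - (k : ℕ)) = ((d + 1 : ℕ) : ℝ) := by
      rw [hd]; push_cast; ring
    rw [hθ]
    set θ : ℝ := ((d + 1 : ℕ) : ℝ) * Real.pi / M with hθd
    have hsin : 0 < Real.sin θ := by
      apply Real.sin_pos_of_pos_of_lt_pi
      · positivity
      · rw [hθd, div_lt_iff₀ hM0, mul_comm]
        have : ((d + 1 : ℕ) : ℝ) < M := by exact_mod_cast hlt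
        exact mul_lt_mul_of_pos_left this Real.pi_pos
    have hNθ : (N : ℝ) * θ = ((d + 1 : ℕ) : ℝ) * Real.pi - θ := by
      have : (M : ℝ) = N + 1 := by rw [hM]; push_cast; rfl
      have h2 : (M : ℝ) * θ = ((d + 1 : ℕ) : ℝ) * Real.pi := by
        rw [hθd]; field_simp
      rw [← h2, this]; ring
    have h1 := hD θ
    rw [hNθ, Real.sin_nat_mul_pi_sub] at h1
    have h3 : D θ = -(-1) ^ (d + 1) := by
      apply mul_left_cancel₀ hsin.ne'
      rw [h1]; ring
    rw [h3, hd]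
    have h4 : (-1 : ℝ) ^ ((k : ℕ) + ((k : ℕ) + d + 1)) * (-1) ^ (d + 1) = 1 := by
      rw [← pow_add]; exact Even.neg_one_pow ⟨k + d + 1, by ring⟩
    rw [mul_div_assoc', mul_neg, h4]
  refine ⟨off, fun k => ?_, ?_, -1 / N, off⟩
  · simpa only [pow_two] using diag k
  · refine aux_tight hN hM (fun k i => γ * (-1 : ℝ) ^ ((k : ℕ) + 1) * htf N M k i) ?_
    intro k l
    rcases lt_trichotomy k l with h | h | h
    · rw [if_neg h.ne]; exact off k l h
    · subst h; rw [if_pos rfl]; exact diag k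
    · rw [if_neg h.ne', ← off l k h]
      exact Finset.sum_congr rfl fun i _ => mul_comm _ _
end

section
/- Let M ≥ 3 and let A ∈ ℝ^{M×M} have entries a_{k,j}. If a_{k,j} ≠ a_{ℓ,j} for some pairwise distinct triple of indices (k, j, ℓ) in {1,...,M} (with j the column index, k ≠ j, ℓ ≠ j, k ≠ ℓ), then there exist a permutation matrix O, a composition m of M, and a Variant II initial codeword ŷ_init compatible with m such that the inequality D(m) O A O^{−1} ŷ_init ≥ 0 (elementwise) fails. Equivalently, if the inequality D(m) O A O^{−1} ŷ_init ≥ 0 holds for all such (O, m, ŷ_init), then in each column of A all off-diagonal entries are equal. -/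
/-- `D(m) z ≥ 0` elementwise: `z` is `m`-descending. -/
def DescIneq {M : ℕ} (c : Composition M) (z : Fin M → ℝ) : Prop :=
  ∀ k ℓ : Fin M, (c.index k : ℕ) + 1 = (c.index ℓ : ℕ) → z ℓ ≤ z k

/-- A Variant II initial codeword compatible with the composition `m`. -/
def VarIICodeword {M : ℕ} (c : Composition M) (y : Fin M → ℝ) : Prop :=
  (∀ k ℓ : Fin M, c.index k = c.index ℓ → y k = y ℓ) ∧
  (∀ k ℓ : Fin M, (c.index k : ℕ) < (c.index ℓ : ℕ) → y ℓ < y k) ∧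
  (∀ k : Fin M, 0 ≤ y k)

theorem ones_index_val {M : ℕ} (k : Fin M) : ((Composition.ones M).index k : ℕ) = k := by
  have hl : (k : ℕ) < (Composition.ones M).length := by simp
  have h0 : 0 < (Composition.ones M).blocksFun ⟨k, hl⟩ := by simp
  have h := Composition.ones_embedding (n := M) ⟨k, hl⟩ h0
  have h2 := Composition.index_embedding (Composition.ones M) ⟨k, hl⟩ ⟨0, h0⟩
  rw [h] at h2
  exact congrArg Fin.val h2

theorem exists_perm3 {α : Type*} [DecidableEq α] (a b c j k l : α) (hab : a ≠ b) (hac : a ≠ c)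
    (hbc : b ≠ c) (hkj : k ≠ j) (hlj : l ≠ j) (hkl : k ≠ l) :
    ∃ σ : Equiv.Perm α, σ a = j ∧ σ b = k ∧ σ c = l := by
  obtain ⟨τ, h1⟩ : ∃ τ : Equiv.Perm α, τ a = j := ⟨Equiv.swap a j, by simp⟩
  obtain ⟨τ2, h2, h3⟩ : ∃ τ : Equiv.Perm α, τ a = j ∧ τ b = k := by
    refine ⟨Equiv.swap (τ b) k * τ, ?_, by simp⟩
    have : j ≠ τ b := by rw [← h1]; exact fun h => hab (τ.injective h)
    simp [h1, Equiv.swap_apply_of_ne_of_ne this hkj.symm]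
  refine ⟨Equiv.swap (τ2 c) l * τ2, ?_, ?_, by simp⟩
  · have : j ≠ τ2 c := by rw [← h2]; exact fun h => hac (τ2.injective h)
    simp [h2, Equiv.swap_apply_of_ne_of_ne this hlj.symm]
  · have : k ≠ τ2 c := by rw [← h3]; exact fun h => hbc (τ2.injective h)
    simp [h3, Equiv.swap_apply_of_ne_of_ne this hkl]

open Matrix in
theorem conj_apply {M : ℕ} (A : Matrix (Fin M) (Fin M) ℝ) (σ : Equiv.Perm (Fin M))
    (y : Fin M → ℝ) (i : Fin M) :
    (((σ.permMatrix ℝ) * A * ((σ⁻¹).permMatrix ℝ)) *ᵥ y) i = ∑ x, A (σ i) (σ x) * y x := by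
  simp only [Matrix.mulVec, dotProduct]
  refine Finset.sum_congr rfl fun x _ => ?_
  congr 1
  simp [Equiv.Perm.permMatrix, PEquiv.toMatrix_toPEquiv_mul, PEquiv.mul_toMatrix_toPEquiv]
  rfl

open Matrix in
theorem stmt16_aux {M : ℕ} (hM : 3 ≤ M) (A : Matrix (Fin M) (Fin M) ℝ)
    (k j ℓ : Fin M) (hkj : k ≠ j) (hlj : ℓ ≠ j) (hkl : k ≠ ℓ)
    (hne : A k j < A ℓ j) :
    ∃ (σ : Equiv.Perm (Fin M)) (c : Composition M) (y : Fin M → ℝ),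
      VarIICodeword c y ∧
      ¬ DescIneq c (((σ.permMatrix ℝ) * A * ((σ⁻¹).permMatrix ℝ)) *ᵥ y) := by
  obtain ⟨σ, h0, h1, h2⟩ := exists_perm3 (⟨0, by omega⟩ : Fin M) ⟨1, by omega⟩ ⟨2, by omega⟩ j k ℓ
    (by simp) (by simp) (by simp) hkj hlj hkl
  set z : Fin M := ⟨0, by omega⟩ with hz
  set S : ℝ := ∑ x : Fin M, (A k (σ x) - A ℓ (σ x)) * ((M : ℝ) - (x : ℕ)) with hS
  have hd : 0 < A ℓ j - A k j := by linarith
  set T : ℝ := (|S| + 1) / (A ℓ j - A k j) with hT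
  have hTpos : 0 < T := by positivity
  have hTS : T * (A ℓ j - A k j) = |S| + 1 := by rw [hT]; field_simp
  refine ⟨σ, Composition.ones M, fun x => ((M : ℝ) - (x : ℕ)) + if x = z then T else 0,
    ⟨?_, ?_, ?_⟩, ?_⟩
  · intro a b h
    have h' := congrArg Fin.val h
    rw [ones_index_val, ones_index_val] at h'
    rw [Fin.ext h']
  · intro a b h
    rw [ones_index_val, ones_index_val] at h
    have hb : b ≠ z := by
      intro hb; rw [hb] at h; simp [hz] at h
    have h' : ((a : ℕ) : ℝ) < (b : ℕ) := by exact_mod_cast h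
    simp only [hb, if_false]
    split_ifs <;> linarith
  · intro a
    have h' : ((a : ℕ) : ℝ) < M := by exact_mod_cast a.2
    show 0 ≤ ((M : ℝ) - (a : ℕ)) + if a = z then T else 0
    split_ifs <;> linarith
  · intro h
    have h := h ⟨1, by omega⟩ ⟨2, by omega⟩ (by rw [ones_index_val, ones_index_val])
    rw [conj_apply, conj_apply, h1, h2, ← sub_nonneg, ← Finset.sum_sub_distrib] at h
    have e : ∑ x : Fin M, (A k (σ x) * (((M : ℝ) - (x : ℕ)) + if x = z then T else 0)
        - A ℓ (σ x) * (((M : ℝ) - (x : ℕ)) + if x = z then T else 0))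
        = S + (A k j - A ℓ j) * T := by
      have : (A k j - A ℓ j) * T
          = ∑ x : Fin M, (A k (σ x) - A ℓ (σ x)) * if x = z then T else 0 := by
        simp [h0]
      rw [this, hS, ← Finset.sum_add_distrib]
      exact Finset.sum_congr rfl fun x _ => by ring
    rw [e] at h
    have := le_abs_self S
    nlinarith

open Matrix in
/-- If `M ≥ 3` and `a_{k,j} ≠ a_{ℓ,j}` for some pairwise distinct triple `(k, j, ℓ)` (two
off-diagonal entries of column `j` differ), then there exist a permutation matrix `O`, a
composition `m` of `M` and a Variant II initial codeword `ŷ_init` compatible with `m` such that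
the inequality `D(m) O A O⁻¹ ŷ_init ≥ 0` fails. -/
theorem stmt16 {M : ℕ} (hM : 3 ≤ M) (A : Matrix (Fin M) (Fin M) ℝ)
    (k j ℓ : Fin M) (hkj : k ≠ j) (hlj : ℓ ≠ j) (hkl : k ≠ ℓ)
    (hne : A k j ≠ A ℓ j) :
    ∃ (σ : Equiv.Perm (Fin M)) (c : Composition M) (y : Fin M → ℝ),
      VarIICodeword c y ∧
      ¬ DescIneq c (((σ.permMatrix ℝ) * A * ((σ⁻¹).permMatrix ℝ)) *ᵥ y) := by
  rcases lt_or_gt_of_ne hne with h | h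
  · exact stmt16_aux hM A k j ℓ hkj hlj hkl h
  · exact stmt16_aux hM A ℓ j k hlj hkj hkl.symm h
end
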